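/- arXiv:1012.0393 — 2 statements merged into one kernel-verified Lean document; each statement's English description precedes it below -/
import Mathlib

section
/- For every x ∈ ℝ^d one has the lower bound (f ∗ 𝒞)(x) = ∫_{ℝ^d} f(y) 𝒞(x − y) dy ≥ (𝒞̄/2) · f(x), i.e. the convolution of f with the covariance function 𝒞 dominates (𝒞̄/2)·e^{−b|x|} pointwise. (Inequality (7), the main content of Lemma 6 of the paper.) -/
open MeasureTheory Real

/-!
If `log f` is `K`-Lipschitz, then `f` varies by a factor of at most `exp (K * R)` over a distance
`R`, so replacing `f y` by `f x` in the convolution with a kernel supported in the ball of radius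
`R` costs at most `(exp (K * R) - 1) * f x` times the `L¹` norm of the kernel. The condition on the
rate makes this error at most half of the main term, because `exp s - 1 ≤ s * exp s ≤ exp 1 * s`
for `0 ≤ s ≤ 1`.
-/

lemma abs_exp_sub_one_le_exp_abs_sub_one (t : ℝ) : |exp t - 1| ≤ exp |t| - 1 := by
  rcases le_total 0 t with ht | ht
  · rw [abs_of_nonneg ht, abs_of_nonneg (sub_nonneg.2 (one_le_exp ht))]
  · rw [abs_of_nonpos ht, abs_of_nonpos (sub_nonpos.2 (exp_le_one_iff.2 ht))]
    linarith [add_one_le_exp t, add_one_le_exp (-t)]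

lemma exp_sub_one_le_mul_exp (s : ℝ) : exp s - 1 ≤ s * exp s := by
  have h := mul_le_mul_of_nonneg_right (one_sub_le_exp_neg s) (exp_pos s).le
  rw [← exp_add, neg_add_cancel, exp_zero] at h
  linarith

lemma exp_sub_one_mul_le_half {s m M : ℝ} (hs : 0 ≤ s) (hM : 0 ≤ M) (hmM : m ≤ M)
    (h : 2 * exp 1 * s * M ≤ m) : (exp s - 1) * M ≤ m / 2 := by
  obtain rfl | hM := hM.eq_or_lt
  · linarith
  have hs_le : s ≤ 1 := by
    have hexp : 2 * exp 1 * s ≤ 1 := le_of_mul_le_mul_right (by linarith) hM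
    nlinarith [add_one_le_exp (1 : ℝ)]
  calc (exp s - 1) * M ≤ s * exp s * M := by gcongr; exact exp_sub_one_le_mul_exp s
    _ ≤ s * exp 1 * M := by gcongr
    _ ≤ m / 2 := by linarith

lemma abs_integral_mul_sub_const_mul_integral_le {α : Type*} [MeasurableSpace α] {μ : Measure α}
    {f g : α → ℝ} {c δ : ℝ} (hf : AEStronglyMeasurable f μ) (hg : Integrable g μ)
    (hfc : ∀ y ∈ Function.support g, |f y - c| ≤ δ) :
    |(∫ y, f y * g y ∂μ) - c * ∫ y, g y ∂μ| ≤ δ * ∫ y, |g y| ∂μ := by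
  have hbound (y : α) : ‖(f y - c) * g y‖ ≤ δ * |g y| := by
    rw [norm_mul, norm_eq_abs, norm_eq_abs]
    by_cases hy : g y = 0
    · simp [hy]
    · exact mul_le_mul_of_nonneg_right (hfc y hy) (abs_nonneg _)
  have hdiff : Integrable (fun y ↦ (f y - c) * g y) μ :=
    (hg.abs.const_mul δ).mono' ((hf.sub aestronglyMeasurable_const).mul hg.aestronglyMeasurable)
      (.of_forall hbound)
  have hsplit : ∫ y, f y * g y ∂μ = (∫ y, (f y - c) * g y ∂μ) + c * ∫ y, g y ∂μ := by
    rw [← integral_const_mul, ← integral_add hdiff (hg.const_mul c)]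
    simp only [sub_mul, sub_add_cancel]
  rw [hsplit, add_sub_cancel_right, ← integral_const_mul]
  exact norm_integral_le_of_norm_le (hg.abs.const_mul δ) (.of_forall hbound)

lemma abs_exp_sub_exp_le_of_lipschitzWith {α : Type*} [PseudoMetricSpace α] {φ : α → ℝ}
    {K : NNReal} (hφ : LipschitzWith K φ) {x y : α} {R : ℝ} (hxy : dist y x ≤ R) :
    |exp (φ y) - exp (φ x)| ≤ (exp (K * R) - 1) * exp (φ x) := by
  have hfactor : exp (φ y) - exp (φ x) = (exp (φ y - φ x) - 1) * exp (φ x) := by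
    rw [sub_mul, ← exp_add, sub_add_cancel, one_mul]
  rw [hfactor, abs_mul, abs_exp]
  gcongr
  calc |exp (φ y - φ x) - 1| ≤ exp |φ y - φ x| - 1 := abs_exp_sub_one_le_exp_abs_sub_one _
    _ ≤ exp (K * R) - 1 := by gcongr; exact hφ.dist_le_mul_of_le hxy

section Convolution

variable {E : Type*} [SeminormedAddCommGroup E] [MeasurableSpace E] [BorelSpace E]
  {μ : Measure E} [μ.IsAddLeftInvariant] [μ.IsNegInvariant]
  {𝒞 φ : E → ℝ} {K : NNReal} {R : ℝ}

lemma abs_integral_exp_mul_sub_le (h𝒞 : Integrable 𝒞 μ)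
    (h𝒞supp : Function.support 𝒞 ⊆ Metric.closedBall 0 R) (hφ : LipschitzWith K φ) (x : E) :
    |(∫ y, exp (φ y) * 𝒞 (x - y) ∂μ) - exp (φ x) * ∫ z, 𝒞 z ∂μ| ≤
      (exp (K * R) - 1) * exp (φ x) * ∫ z, |𝒞 z| ∂μ := by
  rw [← integral_sub_left_eq_self 𝒞 μ x, ← integral_sub_left_eq_self (fun z ↦ |𝒞 z|) μ x]
  refine abs_integral_mul_sub_const_mul_integral_le
    (continuous_exp.comp hφ.continuous).aestronglyMeasurable (h𝒞.comp_sub_left x) fun y hy ↦ ?_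
  have hxy : ‖x - y‖ ≤ R := mem_closedBall_zero_iff.1 (h𝒞supp hy)
  exact abs_exp_sub_exp_le_of_lipschitzWith hφ (by rwa [dist_comm, dist_eq_norm])

theorem convolution_lower_bound_general (hR : 0 ≤ R) (h𝒞 : Integrable 𝒞 μ)
    (h𝒞supp : Function.support 𝒞 ⊆ Metric.closedBall 0 R) (hφ : LipschitzWith K φ)
    (hK : 2 * exp 1 * (K * R) * ∫ z, |𝒞 z| ∂μ ≤ ∫ z, 𝒞 z ∂μ) (x : E) :
    (∫ z, 𝒞 z ∂μ) / 2 * exp (φ x) ≤ ∫ y, exp (φ y) * 𝒞 (x - y) ∂μ := by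
  have herror : (exp (K * R) - 1) * ∫ z, |𝒞 z| ∂μ ≤ (∫ z, 𝒞 z ∂μ) / 2 :=
    exp_sub_one_mul_le_half (by positivity) (integral_nonneg fun _ ↦ abs_nonneg _)
      (integral_mono h𝒞 h𝒞.abs fun _ ↦ le_abs_self _) hK
  have hscaled := mul_le_mul_of_nonneg_right herror (exp_pos (φ x)).le
  linarith [(abs_le.1 (abs_integral_exp_mul_sub_le h𝒞 h𝒞supp hφ x)).1]

end Convolution

/-- Inequality (7) of the paper (main content of Lemma 6): the convolution of
`f x = exp (-b ‖x‖)` (sup-norm on `ℝ^d`) with the covariance function `𝒞`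
dominates `(𝒞̄/2) · f` pointwise. -/
theorem convolution_lower_bound
    (d : ℕ) (hd : 1 ≤ d) (R : ℝ) (hR : 0 < R)
    (𝒞 : (Fin d → ℝ) → ℝ) (h𝒞cont : Continuous 𝒞)
    (h𝒞supp : Function.support 𝒞 ⊆ {x | ‖x‖ ≤ R})
    (h𝒞bar : 0 < ∫ x, 𝒞 x)
    (b : ℝ) (hb : 0 < b)
    (hb' : b ≤ (∫ x, 𝒞 x) / (2 * Real.exp 1 * R * ∫ x, |𝒞 x|))
    (f : (Fin d → ℝ) → ℝ) (hf : ∀ x, f x = Real.exp (-b * ‖x‖)) :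
    ∀ x, (∫ x, 𝒞 x) / 2 * f x ≤ ∫ y, f y * 𝒞 (x - y) := by
  lift b to NNReal using hb.le
  have hball : Function.support 𝒞 ⊆ Metric.closedBall 0 R :=
    fun z hz ↦ mem_closedBall_zero_iff.2 (h𝒞supp hz)
  have hint : Integrable 𝒞 := h𝒞cont.integrable_of_hasCompactSupport
    (.of_support_subset_isCompact (isCompact_closedBall 0 R) hball)
  have hLip : LipschitzWith b fun x : Fin d → ℝ ↦ -(b : ℝ) * ‖x‖ := by
    simpa [Function.comp_def] using
      (lipschitzWith_smul (-(b : ℝ))).comp (lipschitzWith_one_norm (E := Fin d → ℝ))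
  have hrate := mul_le_of_le_div₀ h𝒞bar.le (by positivity) hb'
  simp only [hf]
  exact convolution_lower_bound_general hR.le hint hball hLip (by linarith)
end

section
/- For every x ∈ ℝ^d with |x| ≤ 1/b one has ∫_{ℝ^d} f(y) 𝒞(x − y) dy ≥ 𝒞̄ / (2e); that is, on the cube Λ_{1/b} = {x : |x| < 1/b} the convolution f ∗ 𝒞 is bounded below by the positive constant 𝒞̄/(2e). -/
open MeasureTheory Real

/-!
Since `exp` is `1`-Lipschitz on the nonpositive half-line, `f x = exp (-b‖x‖)` is `b`-Lipschitz.
Hence averaging `f` against `𝒞`, which only sees points within `R` of `x`, replaces `f x * 𝒞̄` with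
an error of at most `b R ‖𝒞‖₁ ≤ 𝒞̄/(2e)`, whereas `f x ≥ 1/e` when `‖x‖ ≤ 1/b`.
-/

open scoped Convolution NNReal Topology

theorem lipschitzOnWith_exp_Iic (a : ℝ) : LipschitzOnWith (exp a).toNNReal exp (Set.Iic a) := by
  refine (convex_Iic a).lipschitzOnWith_of_nnnorm_deriv_le (𝕜 := ℝ)
    (fun _ _ => differentiable_exp.differentiableAt) fun t ht => ?_
  rw [Real.deriv_exp, ← norm_toNNReal, norm_of_nonneg (exp_nonneg t)]
  exact toNNReal_le_toNNReal (exp_le_exp.2 ht)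

section

variable {G : Type*} [SeminormedAddCommGroup G]

theorem lipschitzWith_exp_neg_mul_norm (b : ℝ≥0) :
    LipschitzWith b fun x : G => exp (-b * ‖x‖) := by
  have hexp : LipschitzOnWith 1 exp (Set.Iic 0) := by simpa using lipschitzOnWith_exp_Iic 0
  have hlin : LipschitzWith b fun x : G => -b * ‖x‖ := by
    simpa [Function.comp_def] using
      (lipschitzWith_smul (-b : ℝ)).comp (lipschitzWith_one_norm (E := G))
  have hmaps : Set.MapsTo (fun x : G => -b * ‖x‖) Set.univ (Set.Iic 0) := fun x _ =>
    mul_nonpos_of_nonpos_of_nonneg (neg_nonpos.2 b.coe_nonneg) (norm_nonneg x)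
  simpa [Function.comp_def] using hexp.comp hlin.lipschitzOnWith hmaps

theorem inv_exp_one_le_exp_neg_mul_norm {b : ℝ} (hb : 0 < b) {x : G} (hx : ‖x‖ ≤ 1 / b) :
    (exp 1)⁻¹ ≤ exp (-b * ‖x‖) := by
  rw [← exp_neg, exp_le_exp, neg_mul, neg_le_neg_iff]
  exact (le_div_iff₀' hb).1 hx

variable [MeasurableSpace G] [BorelSpace G] [SecondCountableTopology G]
  {μ : Measure G} [SFinite μ] [μ.IsAddLeftInvariant]

theorem dist_convolution_le_of_lipschitzWith {𝕜 E E' F : Type*} [NontriviallyNormedField 𝕜]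
    [NormedAddCommGroup E] [NormedSpace 𝕜 E] [NormedAddCommGroup E'] [NormedSpace 𝕜 E']
    [NormedAddCommGroup F] [NormedSpace 𝕜 F] [NormedSpace ℝ F] (L : E →L[𝕜] E' →L[𝕜] F)
    {f : G → E} {g : G → E'} {R : ℝ} {K : ℝ≥0} (hR : 0 ≤ R) (hf : Integrable f μ)
    (hsupp : Function.support f ⊆ Metric.closedBall 0 R) (hg : LipschitzWith K g) (x : G) :
    dist ((f ⋆[L, μ] g) x) (∫ t, L (f t) (g x) ∂μ) ≤ (‖L‖ * ∫ t, ‖f t‖ ∂μ) * (K * R) := by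
  -- `dist_convolution_le'` wants the support in an open ball, so let its radius decrease to `R`.
  have hopen : ∀ r ∈ Set.Ioi R,
      dist ((f ⋆[L, μ] g) x) (∫ t, L (f t) (g x) ∂μ) ≤ (‖L‖ * ∫ t, ‖f t‖ ∂μ) * (K * r) :=
    fun r hr => dist_convolution_le' L (mul_nonneg K.coe_nonneg (hR.trans hr.le)) hf
      (hsupp.trans (Metric.closedBall_subset_ball hr)) hg.continuous.aestronglyMeasurable
      fun y hy => hg.dist_le_mul_of_le (Metric.mem_ball.1 hy).le
  have hlim : Filter.Tendsto (fun r : ℝ => (‖L‖ * ∫ t, ‖f t‖ ∂μ) * (K * r)) (𝓝[>] R)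
      (𝓝 ((‖L‖ * ∫ t, ‖f t‖ ∂μ) * (K * R))) :=
    tendsto_nhdsWithin_of_tendsto_nhds (by fun_prop : Continuous _).continuousAt
  exact ge_of_tendsto hlim (Filter.eventually_of_mem self_mem_nhdsWithin hopen)

theorem mul_integral_sub_le_integral_mul_sub_of_lipschitzWith [μ.IsNegInvariant] {f g : G → ℝ}
    {R : ℝ} {K : ℝ≥0} (hR : 0 ≤ R) (hf : LipschitzWith K f) (hg : Integrable g μ)
    (hsupp : Function.support g ⊆ Metric.closedBall 0 R) (x : G) :
    f x * (∫ y, g y ∂μ) - K * R * ∫ y, |g y| ∂μ ≤ ∫ y, f y * g (x - y) ∂μ := by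
  have hdist := dist_convolution_le_of_lipschitzWith (ContinuousLinearMap.mul ℝ ℝ) hR hg hsupp hf x
  have hswap : (g ⋆[ContinuousLinearMap.mul ℝ ℝ, μ] f) x = ∫ y, f y * g (x - y) ∂μ := by
    simp only [convolution_mul_swap, mul_comm]
  simp only [hswap, ContinuousLinearMap.mul_apply', integral_mul_const,
    ContinuousLinearMap.opNorm_mul, one_mul, norm_eq_abs, Real.dist_eq] at hdist
  linarith [neg_le_of_abs_le hdist]

theorem convolution_lower_bound_on_cube_general [μ.IsNegInvariant] {R : ℝ} (hR : 0 < R)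
    {𝒞 : G → ℝ} (h𝒞supp : Function.support 𝒞 ⊆ Metric.closedBall 0 R)
    (h𝒞bar : 0 < ∫ x, 𝒞 x ∂μ) {b : ℝ} (hb : 0 < b)
    (hb' : b ≤ (∫ x, 𝒞 x ∂μ) / (2 * exp 1 * R * ∫ x, |𝒞 x| ∂μ)) {x : G} (hx : ‖x‖ ≤ 1 / b) :
    (∫ z, 𝒞 z ∂μ) / (2 * exp 1) ≤ ∫ y, exp (-b * ‖y‖) * 𝒞 (x - y) ∂μ := by
  have hint : Integrable 𝒞 μ := .of_integral_ne_zero h𝒞bar.ne'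
  have habs : 0 < ∫ z, |𝒞 z| ∂μ :=
    h𝒞bar.trans_le (integral_mono hint hint.abs fun z => le_abs_self _)
  have herror : b * R * ∫ z, |𝒞 z| ∂μ ≤ (∫ z, 𝒞 z ∂μ) / (2 * exp 1) := by
    rw [le_div_iff₀ (by positivity)] at hb' ⊢
    linarith
  calc (∫ z, 𝒞 z ∂μ) / (2 * exp 1)
      = (exp 1)⁻¹ * (∫ z, 𝒞 z ∂μ) - (∫ z, 𝒞 z ∂μ) / (2 * exp 1) := by field_simp; norm_num
    _ ≤ exp (-b * ‖x‖) * (∫ z, 𝒞 z ∂μ) - b * R * ∫ z, |𝒞 z| ∂μ := by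
        gcongr
        exact inv_exp_one_le_exp_neg_mul_norm hb hx
    _ ≤ ∫ y, exp (-b * ‖y‖) * 𝒞 (x - y) ∂μ :=
        mul_integral_sub_le_integral_mul_sub_of_lipschitzWith hR.le
          (lipschitzWith_exp_neg_mul_norm ⟨b, hb.le⟩) hint h𝒞supp x

end

/-- On the cube `Λ_{1/b}` the convolution `f ∗ 𝒞` is bounded below by the
positive constant `𝒞̄/(2e)`: for every `x` with `‖x‖ ≤ 1/b` one has
`∫ f(y) 𝒞(x−y) dy ≥ 𝒞̄/(2e)`. -/
theorem convolution_lower_bound_on_cube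
    (d : ℕ) (hd : 1 ≤ d) (R : ℝ) (hR : 0 < R)
    (𝒞 : (Fin d → ℝ) → ℝ) (h𝒞cont : Continuous 𝒞)
    (h𝒞supp : Function.support 𝒞 ⊆ {x | ‖x‖ ≤ R})
    (h𝒞bar : 0 < ∫ x, 𝒞 x)
    (b : ℝ) (hb : 0 < b)
    (hb' : b ≤ (∫ x, 𝒞 x) / (2 * Real.exp 1 * R * ∫ x, |𝒞 x|))
    (f : (Fin d → ℝ) → ℝ) (hf : ∀ x, f x = Real.exp (-b * ‖x‖)) :
    ∀ x : Fin d → ℝ, ‖x‖ ≤ 1 / b →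
      (∫ z, 𝒞 z) / (2 * Real.exp 1) ≤ ∫ y, f y * 𝒞 (x - y) := by
  intro x hx
  simp only [hf]
  exact convolution_lower_bound_on_cube_general hR
    (by simpa [Set.subset_def] using h𝒞supp) h𝒞bar hb hb' hx
end
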